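/- Let f : X → Y be a map of retractive spaces over B. Assume the sections i_X, i_Y are h-cofibrations, the projections p_X, p_Y are Hurewicz fibrations, and f is a homotopy equivalence of total spaces. Then f is a fiberwise based homotopy equivalence: there is a map g : Y → X of retractive spaces over B such that g ∘ f and f ∘ g are homotopic to the respective identities through maps of retractive spaces over B. -/

import Mathlib

open unitInterval Topology

/-- A continuous map `p : X → B` is a *Hurewicz fibration* if the map
`C([0,1],X) → X ×_B C([0,1],B)`, `γ ↦ (γ 0, p ∘ γ)`, admits a continuous section, i.e. there
is a continuous path-lifting function. -/
def IsHurewiczFibration {X B : Type*} [TopologicalSpace X] [TopologicalSpace B]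
    (p : C(X, B)) : Prop :=
  ∃ s : C({q : X × C(I, B) // p q.1 = q.2 0}, C(I, X)),
    ∀ q : {q : X × C(I, B) // p q.1 = q.2 0},
      s q 0 = q.1.1 ∧ ∀ t : I, p (s q t) = q.1.2 t

/-- A continuous map `i : X → Y` is an *h-cofibration* if it is a closed embedding and
`(Y × {0}) ∪ (i(X) × [0,1])` is a retract of `Y × [0,1]`. -/
def IsHCofibration {X Y : Type*} [TopologicalSpace X] [TopologicalSpace Y]
    (i : C(X, Y)) : Prop :=
  IsClosedEmbedding (⇑i) ∧
  ∃ r : C(Y × I, Y × I),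
    (∀ z : Y × I, (r z).2 = 0 ∨ (r z).1 ∈ Set.range ⇑i) ∧
    ∀ z : Y × I, (z.2 = 0 ∨ z.1 ∈ Set.range ⇑i) → r z = z

/-- A map `i : X → Y` of spaces over `B` (where `pY : Y → B` is the structure map of `Y`)
is an *f-cofibration over `B`* if it is a closed embedding and `(Y × {0}) ∪ (i(X) × [0,1])`
is a retract of `Y × [0,1]` via a retraction commuting with the projections to `B`. -/
def IsFCofibration {X Y B : Type*} [TopologicalSpace X] [TopologicalSpace Y]
    [TopologicalSpace B] (i : C(X, Y)) (pY : C(Y, B)) : Prop :=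
  IsClosedEmbedding (⇑i) ∧
  ∃ r : C(Y × I, Y × I),
    (∀ z : Y × I, (r z).2 = 0 ∨ (r z).1 ∈ Set.range ⇑i) ∧
    (∀ z : Y × I, (z.2 = 0 ∨ z.1 ∈ Set.range ⇑i) → r z = z) ∧
    ∀ z : Y × I, pY (r z).1 = pY z.1

/-- A continuous map is a homotopy equivalence if it admits a two-sided homotopy inverse. -/
def IsHomotopyEquiv {X Y : Type*} [TopologicalSpace X] [TopologicalSpace Y]
    (f : C(X, Y)) : Prop :=
  ∃ g : C(Y, X), (g.comp f).Homotopic (ContinuousMap.id X) ∧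
    (f.comp g).Homotopic (ContinuousMap.id Y)

/-- A closed subset `A` of `X` such that `(X × {0}) ∪ (A × [0,1])` is a retract of `X × [0,1]`. -/
def IsCofibrantSubset {X : Type*} [TopologicalSpace X] (A : Set X) : Prop :=
  IsClosed A ∧ ∃ r : C(X × I, X × I),
    (∀ z : X × I, (r z).2 = 0 ∨ (r z).1 ∈ A) ∧
    ∀ z : X × I, (z.2 = 0 ∨ z.1 ∈ A) → r z = z

theorem IsHCofibration.isCofibrantSubset_range {X Y : Type*} [TopologicalSpace X]
    [TopologicalSpace Y] {i : C(X, Y)} (hi : IsHCofibration i) :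
    IsCofibrantSubset (Set.range i) :=
  ⟨hi.1.isClosed_range, hi.2⟩

/-- A cofibrant subset is the zero set of a continuous function. -/
theorem IsCofibrantSubset.exists_zeroSet {X : Type*} [TopologicalSpace X] {A : Set X}
    (hA : IsCofibrantSubset A) : ∃ φ : C(X, ℝ), ∀ x, φ x = 0 ↔ x ∈ A := by
  obtain ⟨hcl, r, hr, hfix⟩ := hA
  let d : X → I → ℝ := fun x t => t - (r (x, t)).2
  have hd : Continuous ↿d := by
    change Continuous fun z : X × I => (z.2 : ℝ) - (r z).2
    fun_prop
  have hdx : ∀ x, Continuous (d x) := fun x => hd.comp (by fun_prop : Continuous fun t => (x, t))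
  have hbdd : ∀ x, BddAbove (d x '' Set.univ) := fun x =>
    (isCompact_univ.image (hdx x)).bddAbove
  refine ⟨⟨fun x => sSup (d x '' Set.univ), isCompact_univ.continuous_sSup hd⟩, fun x => ?_⟩
  simp only [ContinuousMap.coe_mk]
  constructor
  · intro h
    have hmem : ∀ t : I, t ≠ 0 → (r (x, t)).1 ∈ A := by
      intro t ht
      refine (hr (x, t)).resolve_left fun h0 => ht ?_
      have hle : d x t ≤ 0 := h ▸ le_csSup (hbdd x) ⟨t, trivial, rfl⟩
      have : (t : ℝ) ≤ 0 := by simpa [d, h0] using hle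
      exact le_antisymm this t.2.1
    have hx : (r (x, 0)).1 = x := by rw [hfix (x, 0) (Or.inl rfl)]
    have hcont : Continuous fun t : I => (r (x, t)).1 := by fun_prop
    have hclosed : IsClosed {t : I | (r (x, t)).1 ∈ A} := hcl.preimage hcont
    have hdense : Dense ({0}ᶜ : Set I) := dense_compl_singleton 0
    have : (0 : I) ∈ {t : I | (r (x, t)).1 ∈ A} :=
      hclosed.closure_subset_iff.2 (fun t ht => hmem t ht) (hdense 0)
    simpa [hx] using this
  · intro h
    have : d x = fun _ => 0 := by
      funext t
      simp [d, hfix (x, t) (Or.inr h)]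
    simp [this]

/-- A homotopy that is stationary on the zero set of `φ` can be reparametrized so that it is
completed by time `φ`. -/
theorem continuous_reparam {W : Type*} [TopologicalSpace W] (D : C(W × I, W)) (φ : C(W, ℝ))
    (hD : ∀ w s, φ w = 0 → D (w, s) = w) :
    Continuous fun z : W × ℝ => D (z.1, Set.projIcc 0 1 zero_le_one (z.2 / φ z.1)) := by
  rw [continuous_iff_continuousAt]
  rintro ⟨w, t⟩
  by_cases hw : φ w = 0
  · intro U hU
    simp only [hD w _ hw] at hU
    obtain ⟨U', hU'U, hU'o, hwU'⟩ := mem_nhds_iff.1 hU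
    obtain ⟨V, V', hV, -, hwV, hV', hVV'⟩ :=
      generalized_tube_lemma (isCompact_singleton (x := w)) (isCompact_univ (X := I))
        (hU'o.preimage D.continuous) (by
          rintro ⟨a, s⟩ ⟨ha, -⟩
          obtain rfl : a = w := ha
          simpa [hD a s hw] using hwU')
    have : V ∈ 𝓝 w := hV.mem_nhds (hwV rfl)
    refine Filter.mem_map.2 ?_
    filter_upwards [continuous_fst.continuousAt.preimage_mem_nhds this] with z hz
    exact hU'U (hVV' (Set.mk_mem_prod hz (hV' trivial)))
  · have h1 : ContinuousAt (fun z : W × ℝ => z.2 / φ z.1) (w, t) :=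
      continuousAt_snd.div (by fun_prop) hw
    exact D.continuous.continuousAt.comp
      (continuousAt_fst.prodMk (continuous_projIcc.continuousAt.comp h1))

/-- Relative homotopy lifting: a Hurewicz fibration has the right lifting property with respect
to `(X × {0}) ∪ (A × [0,1]) → X × [0,1]` for a cofibrant subset `A`. -/
theorem IsHurewiczFibration.exists_relative_lift {X E B : Type*} [TopologicalSpace X]
    [TopologicalSpace E] [TopologicalSpace B] {p : C(E, B)} (hp : IsHurewiczFibration p)
    {A : Set X} (hA : IsCofibrantSubset A) (g : X × I → E)
    (hg : ContinuousOn g {z | z.2 = 0 ∨ z.1 ∈ A}) (h : C(X × I, B))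
    (hgh : ∀ z : X × I, (z.2 = 0 ∨ z.1 ∈ A) → p (g z) = h z) :
    ∃ k : C(X × I, E), (∀ z, p (k z) = h z) ∧
      ∀ z : X × I, (z.2 = 0 ∨ z.1 ∈ A) → k z = g z := by
  obtain ⟨φ₀, hφ₀⟩ := hA.exists_zeroSet
  obtain ⟨hcl, r, hr, hfix⟩ := hA
  obtain ⟨s, hs⟩ := hp
  let φ : C(X × I, ℝ) := ⟨fun z => Set.projIcc (0 : ℝ) 1 zero_le_one |φ₀ z.1| * z.2, by fun_prop⟩
  have hφI : ∀ z, φ z ∈ I := fun z => unitInterval.mul_mem (Subtype.prop _) z.2.2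
  have hφ : ∀ z, φ z = 0 ↔ (z.2 = 0 ∨ z.1 ∈ A) := by
    intro z
    have : (Set.projIcc (0 : ℝ) 1 zero_le_one |φ₀ z.1| : ℝ) = 0 ↔ φ₀ z.1 = 0 := by
      rw [Set.coe_projIcc]
      constructor
      · intro h
        by_contra hne
        have := abs_pos.2 hne
        have := lt_min one_pos this
        rw [max_eq_right this.le] at h
        linarith
      · intro h
        simp [h]
    simp only [φ, ContinuousMap.coe_mk, mul_eq_zero, this, hφ₀]
    rw [or_comm]
    simp
  let D : C((X × I) × I, X × I) :=
    ⟨fun w => ((r (w.1.1, σ w.2 * w.1.2)).1,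
      Set.projIcc 0 1 zero_le_one ((w.2 : ℝ) * w.1.2 + (1 - w.2) * (r w.1).2)), by fun_prop⟩
  have hD0 : ∀ z, D (z, 0) = r z := by
    intro z
    simp [D, Set.projIcc_val]
  have hD1 : ∀ z, D (z, 1) = z := by
    intro z
    simp [D, Set.projIcc_val, hfix (z.1, 0) (Or.inl rfl)]
  have hDfix : ∀ z t, φ z = 0 → D (z, t) = z := by
    rintro ⟨x, u⟩ t hz
    rw [hφ] at hz
    have h1 : r (x, σ t * u) = (x, σ t * u) := hfix _ <| by
      rcases hz with hz | hz
      · left; simpa using Or.inr hz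
      · right; exact hz
    have h2 : (t : ℝ) * u + (1 - t) * u = u := by ring
    simp [D, hfix (x, u) hz, h1, h2, Set.projIcc_val]
  let D' : C((X × I) × ℝ, X × I) := ⟨_, continuous_reparam D φ hDfix⟩
  have hD'0 : ∀ z, D' (z, 0) = r z := by
    intro z
    simp [D', Set.projIcc_left, hD0]
  have hD'φ : ∀ z, D' (z, φ z) = z := by
    intro z
    by_cases hz : φ z = 0
    · exact hDfix _ _ hz
    · simp only [D', ContinuousMap.coe_mk, div_self hz]
      rw [Set.projIcc_right]
      exact hD1 z
  let path : C(X × I, C(I, B)) :=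
    ContinuousMap.curry ⟨fun w : (X × I) × I => h (D' (w.1, (w.2 : ℝ))), by fun_prop⟩
  have hgr : Continuous fun z => g (r z) := hg.comp_continuous r.continuous hr
  have hstart : ∀ z, p (g (r z)) = path z 0 := fun z => by
    simp [path, hD'0, hgh _ (hr z)]
  let start : C(X × I, {q : E × C(I, B) // p q.1 = q.2 0}) :=
    ⟨fun z => ⟨(g (r z), path z), hstart z⟩,
      (hgr.prodMk path.continuous).subtype_mk _⟩
  refine ⟨⟨fun z => s (start z) ⟨φ z, hφI z⟩, ?_⟩, fun z => ?_, fun z hz => ?_⟩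
  · exact ((s.comp start).continuous).eval (φ.continuous.subtype_mk hφI)
  · have := (hs (start z)).2 ⟨φ z, hφI z⟩
    simp only [ContinuousMap.coe_mk, this]
    simp [start, path, hD'φ]
  · have h0 : (⟨φ z, hφI z⟩ : I) = 0 := Subtype.ext ((hφ z).2 hz)
    simp only [ContinuousMap.coe_mk, h0, (hs (start z)).1]
    simp [start, hfix z hz]

/-- The ends of the cylinder `P × [0,1]` form a cofibrant subset. -/
theorem isCofibrantSubset_ends (P : Type*) [TopologicalSpace P] :
    IsCofibrantSubset {z : P × I | z.2 = 0 ∨ z.2 = 1} := by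
  let m : (P × I) × I → ℝ := fun z => max (2 * |2 * (z.1.2 : ℝ) - 1|) (2 - z.2)
  have hm : Continuous m := by fun_prop
  have hmpos : ∀ z, 0 < m z := fun z =>
    lt_max_of_lt_right (by linarith [z.2.2.2])
  refine ⟨(isClosed_eq continuous_snd continuous_const).union
    (isClosed_eq continuous_snd continuous_const), ⟨fun z => ((z.1.1,
      Set.projIcc (0 : ℝ) 1 zero_le_one ((1 + 2 * (2 * (z.1.2 : ℝ) - 1) / m z) / 2)),
      Set.projIcc (0 : ℝ) 1 zero_le_one (2 - 2 * (2 - (z.2 : ℝ)) / m z)), ?_⟩, ?_, ?_⟩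
  · have h1 : Continuous fun z : (P × I) × I => 2 * (2 * (z.1.2 : ℝ) - 1) / m z :=
      Continuous.div (by fun_prop) hm fun z => (hmpos z).ne'
    have h2 : Continuous fun z : (P × I) × I => 2 * (2 - (z.2 : ℝ)) / m z :=
      Continuous.div (by fun_prop) hm fun z => (hmpos z).ne'
    fun_prop
  · intro z
    have hpos := hmpos z
    simp only [ContinuousMap.coe_mk, Set.mem_ofPred_eq]
    rcases le_total (2 * |2 * (z.1.2 : ℝ) - 1|) (2 - z.2) with hle | hle
    · left
      have : m z = 2 - z.2 := max_eq_right hle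
      apply Set.projIcc_of_le_left
      rw [this] at hpos ⊢
      rw [mul_div_assoc, div_self hpos.ne']
      norm_num
    · right
      have : m z = 2 * |2 * (z.1.2 : ℝ) - 1| := max_eq_left hle
      rw [this] at hpos ⊢
      rcases abs_cases (2 * (z.1.2 : ℝ) - 1) with ⟨h, -⟩ | ⟨h, -⟩
      · right
        apply Set.projIcc_of_right_le
        rw [h] at hpos ⊢
        rw [div_self hpos.ne']
        norm_num
      · left
        apply Set.projIcc_of_le_left
        rw [h] at hpos ⊢
        rw [mul_neg, div_neg, div_self (by linarith)]
        norm_num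
  · rintro ⟨⟨n, u⟩, t⟩ hz
    have hm2 : m ((n, u), t) = 2 := by
      have hu0 := u.2.1
      have hu1 := u.2.2
      have ht0 := t.2.1
      simp only [m]
      rcases hz with rfl | rfl | rfl
      · rw [max_eq_right] <;> simp
        rw [abs_le]; constructor <;> linarith
      · rw [max_eq_left] <;> simp [ht0]
      · rw [max_eq_left] <;> norm_num [ht0]
    simp [hm2, Set.projIcc_val]

/-- Lifting of a square of paths with three prescribed sides along a Hurewicz fibration. -/
theorem IsHurewiczFibration.exists_square_lift {P E B : Type*} [TopologicalSpace P]
    [TopologicalSpace E] [TopologicalSpace B] {p : C(E, B)} (hp : IsHurewiczFibration p)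
    (bottom left right : C(P × I, E)) (h : C((P × I) × I, B))
    (hbl : ∀ n, bottom (n, 0) = left (n, 0)) (hbr : ∀ n, bottom (n, 1) = right (n, 0))
    (hb : ∀ n u, p (bottom (n, u)) = h ((n, u), 0))
    (hl : ∀ n t, p (left (n, t)) = h ((n, 0), t))
    (hr : ∀ n t, p (right (n, t)) = h ((n, 1), t)) :
    ∃ k : C((P × I) × I, E), (∀ z, p (k z) = h z) ∧ (∀ n u, k ((n, u), 0) = bottom (n, u)) ∧
      (∀ n t, k ((n, 0), t) = left (n, t)) ∧ ∀ n t, k ((n, 1), t) = right (n, t) := by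
  classical
  let g : (P × I) × I → E := fun z =>
    if z.2 = 0 then bottom z.1 else if z.1.2 = 0 then left (z.1.1, z.2) else right (z.1.1, z.2)
  have gb : ∀ n u, g ((n, u), 0) = bottom (n, u) := fun n u => by simp [g]
  have gl : ∀ n t, g ((n, 0), t) = left (n, t) := fun n t => by
    by_cases ht : t = 0
    · subst ht; simp [g, hbl]
    · simp [g, ht]
  have gr : ∀ n t, g ((n, 1), t) = right (n, t) := fun n t => by
    by_cases ht : t = 0
    · subst ht; simp [g, hbr]
    · simp [g, ht]
  have cb : ContinuousOn g {z | z.2 = 0} :=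
    ContinuousOn.congr (f := fun z => bottom z.1) (by fun_prop) (by
      rintro ⟨⟨n, u⟩, t⟩ (rfl : t = 0); exact gb n u)
  have cl : ContinuousOn g {z | z.1.2 = 0} :=
    ContinuousOn.congr (f := fun z => left (z.1.1, z.2)) (by fun_prop) (by
      rintro ⟨⟨n, u⟩, t⟩ (rfl : u = 0); exact gl n t)
  have cr : ContinuousOn g {z | z.1.2 = 1} :=
    ContinuousOn.congr (f := fun z => right (z.1.1, z.2)) (by fun_prop) (by
      rintro ⟨⟨n, u⟩, t⟩ (rfl : u = 1); exact gr n t)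
  have closed_l : IsClosed {z : (P × I) × I | z.1.2 = 0} :=
    isClosed_eq (by fun_prop) continuous_const
  have closed_r : IsClosed {z : (P × I) × I | z.1.2 = 1} :=
    isClosed_eq (by fun_prop) continuous_const
  have closed_b : IsClosed {z : (P × I) × I | z.2 = 0} :=
    isClosed_eq (by fun_prop) continuous_const
  have hg := cb.union_of_isClosed (cl.union_of_isClosed cr closed_l closed_r) closed_b
    (closed_l.union closed_r)
  obtain ⟨k, hk, hkg⟩ := hp.exists_relative_lift (isCofibrantSubset_ends P) g hg h (by
    rintro ⟨⟨n, u⟩, t⟩ (rfl | rfl | rfl)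
    · rw [gb, hb]
    · rw [gl, hl]
    · rw [gr, hr])
  exact ⟨k, hk, fun n u => (hkg _ (Or.inl rfl)).trans (gb n u),
    fun n t => (hkg _ (Or.inr (Or.inl rfl))).trans (gl n t),
    fun n t => (hkg _ (Or.inr (Or.inr rfl))).trans (gr n t)⟩

/-- The homotopy lifting property of a Hurewicz fibration. -/
theorem IsHurewiczFibration.exists_homotopy_lift {X E B : Type*} [TopologicalSpace X]
    [TopologicalSpace E] [TopologicalSpace B] {p : C(E, B)} (hp : IsHurewiczFibration p)
    (g : C(X, E)) (h : C(X × I, B)) (hgh : ∀ x, p (g x) = h (x, 0)) :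
    ∃ k : C(X × I, E), (∀ z, p (k z) = h z) ∧ ∀ x, k (x, 0) = g x := by
  obtain ⟨s, hs⟩ := hp
  let start : C(X, {q : E × C(I, B) // p q.1 = q.2 0}) :=
    ⟨fun x => ⟨(g x, h.curry x), hgh x⟩,
      (g.continuous.prodMk h.curry.continuous).subtype_mk _⟩
  exact ⟨(s.comp start).uncurry, fun z => (hs (start z.1)).2 z.2, fun x => (hs (start x)).1⟩

/-- A Hurewicz fibration that is a homotopy equivalence is shrinkable: it has a section that is
a fiberwise homotopy inverse. -/
theorem IsHurewiczFibration.exists_shrinking {E B : Type*} [TopologicalSpace E]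
    [TopologicalSpace B] {q : C(E, B)} (hq : IsHurewiczFibration q) (he : IsHomotopyEquiv q) :
    ∃ s : C(B, E), (∀ b, q (s b) = b) ∧ ∃ Θ : C(E × I, E),
      (∀ e, Θ (e, 0) = s (q e)) ∧ (∀ e, Θ (e, 1) = e) ∧ ∀ e t, q (Θ (e, t)) = q e := by
  obtain ⟨s', hs'q, hqs'⟩ := he
  obtain ⟨K⟩ := hqs'
  obtain ⟨k, hk, hk0⟩ := hq.exists_homotopy_lift s'
    ⟨fun z => K (z.2, z.1), by fun_prop⟩ (fun b => by simp)
  let s : C(B, E) := ⟨fun b => k (b, 1), by fun_prop⟩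
  have hqs : ∀ b, q (s b) = b := fun b => by simp [s, hk]
  have hss' : s'.Homotopic s := ⟨⟨⟨fun z => k (z.2, z.1), by fun_prop⟩, hk0, fun _ => rfl⟩⟩
  have hsq : (ContinuousMap.id E).Homotopic (s.comp q) :=
    hs'q.symm.trans (hss'.comp (ContinuousMap.Homotopic.refl q))
  obtain ⟨Φ⟩ := hsq
  have hΦ1 : ∀ e, Φ (1, e) = s (q e) := fun e => Φ.apply_one e
  have hΦ0 : ∀ e, Φ (0, e) = e := fun e => Φ.apply_zero e
  obtain ⟨Θ, hΘ, -, hΘl, hΘr⟩ := hq.exists_square_lift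
    (⟨fun z => s (q z.1), by fun_prop⟩ : C(E × I, E))
    ⟨fun z => s (q (Φ (σ z.2, z.1))), by fun_prop⟩
    ⟨fun z => Φ (σ z.2, z.1), by fun_prop⟩
    ⟨fun z => q (Φ (σ z.2, z.1.1)), by fun_prop⟩
    (fun n => by simp [hqs, hΦ1]) (fun n => by simp [hΦ1]) (fun n u => by simp [hqs, hΦ1])
    (fun n t => by simp [hqs]) (fun n t => by simp)
  refine ⟨s, hqs, ⟨fun z => Θ (z, 1), by fun_prop⟩, fun e => ?_, fun e => ?_, fun e t => ?_⟩
  · simp [hΘl, hΦ0]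
  · simp [hΘr, hΦ0]
  · simp [hΘ, hΦ0]

/-- A section over a cofibrant retract of the base of an acyclic Hurewicz fibration extends. -/
theorem IsHurewiczFibration.exists_section_extending {E Y B : Type*} [TopologicalSpace E]
    [TopologicalSpace Y] [TopologicalSpace B] {q : C(E, Y)} (hq : IsHurewiczFibration q)
    (he : IsHomotopyEquiv q) (i : C(B, Y)) (p : C(Y, B)) (hpi : ∀ b, p (i b) = b)
    (hi : IsHCofibration i) (τ : C(B, E)) (hτ : ∀ b, q (τ b) = i b) :
    ∃ s : C(Y, E), (∀ y, q (s y) = y) ∧ ∀ b, s (i b) = τ b := by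
  classical
  obtain ⟨s, hs, Θ, hΘ0, hΘ1, hΘ⟩ := hq.exists_shrinking he
  let g : Y × I → E := fun z => if z.2 = 0 then s z.1 else Θ (τ (p z.1), z.2)
  have g0 : ∀ y, g (y, 0) = s y := fun y => by simp [g]
  have gi : ∀ b t, g (i b, t) = Θ (τ b, t) := fun b t => by
    by_cases ht : t = 0
    · subst ht; simp [g, hΘ0, hτ]
    · simp [g, ht, hpi]
  have c0 : ContinuousOn g {z | z.2 = 0} :=
    ContinuousOn.congr (f := fun z => s z.1) (by fun_prop) (by
      rintro ⟨y, t⟩ (rfl : t = 0); exact g0 y)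
  have ci : ContinuousOn g {z | z.1 ∈ Set.range i} :=
    ContinuousOn.congr (f := fun z => Θ (τ (p z.1), z.2)) (by fun_prop) (by
      rintro ⟨_, t⟩ ⟨b, rfl⟩; simp only [gi, hpi])
  have hg := c0.union_of_isClosed ci (isClosed_eq (by fun_prop) continuous_const)
    (hi.1.isClosed_range.preimage continuous_fst)
  obtain ⟨k, hk, hkg⟩ := hq.exists_relative_lift hi.isCofibrantSubset_range g hg
    ⟨fun z => z.1, by fun_prop⟩ (by
      rintro ⟨y, t⟩ (h | ⟨b, rfl⟩)
      · obtain rfl : t = 0 := h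
        simp [g0, hs]
      · simp [gi, hΘ, hτ])
  refine ⟨⟨fun y => k (y, 1), by fun_prop⟩, fun y => hk _, fun b => ?_⟩
  simp only [ContinuousMap.coe_mk]
  rw [hkg _ (Or.inr ⟨b, rfl⟩), gi, hΘ1]

/-- The fiberwise mapping path space of a map `f : X → Y` over `B`. -/
abbrev FiberwisePathSpace {B X Y : Type*} [TopologicalSpace B] [TopologicalSpace X]
    [TopologicalSpace Y] (pX : C(X, B)) (pY : C(Y, B)) (f : C(X, Y)) : Type _ :=
  {n : X × C(I, Y) // n.2 0 = f n.1 ∧ ∀ u, pY (n.2 u) = pX n.1}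

/-- Evaluation of the path component at its end point. -/
def FiberwisePathSpace.endpoint {B X Y : Type*} [TopologicalSpace B] [TopologicalSpace X]
    [TopologicalSpace Y] (pX : C(X, B)) (pY : C(Y, B)) (f : C(X, Y)) :
    C(FiberwisePathSpace pX pY f, Y) :=
  ⟨fun n => n.1.2 1, by fun_prop⟩

theorem FiberwisePathSpace.isHurewiczFibration_endpoint {B X Y : Type*} [TopologicalSpace B]
    [TopologicalSpace X] [TopologicalSpace Y] {pX : C(X, B)} {pY : C(Y, B)}
    (hpX : IsHurewiczFibration pX) (hpY : IsHurewiczFibration pY)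
    (f : C(X, Y)) (hfp : ∀ x, pY (f x) = pX x) :
    IsHurewiczFibration (endpoint pX pY f) := by
  let P := {q : FiberwisePathSpace pX pY f × C(I, Y) // endpoint pX pY f q.1 = q.2 0}
  let x₀ : C(P, X) := ⟨fun z => z.1.1.1.1,
    (continuous_subtype_val.fst.subtype_val).fst⟩
  let γ₀ : C(P, C(I, Y)) := ⟨fun z => z.1.1.1.2,
    (continuous_subtype_val.fst.subtype_val).snd⟩
  let δ : C(P, C(I, Y)) := ⟨fun z => z.1.2, continuous_subtype_val.snd⟩
  have hδ : ∀ z, γ₀ z 1 = δ z 0 := fun z => z.2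
  have hγ₀ : ∀ z, γ₀ z 0 = f (x₀ z) := fun z => z.1.1.2.1
  have hpγ₀ : ∀ z u, pY (γ₀ z u) = pX (x₀ z) := fun z => z.1.1.2.2
  obtain ⟨x, hx, hx0⟩ := hpX.exists_homotopy_lift x₀
    ⟨fun z => pY (δ z.1 z.2), by fun_prop⟩ (fun z => by simp [← hδ, hpγ₀])
  obtain ⟨k, hk, hkb, hkl, hkr⟩ := hpY.exists_square_lift
    (⟨fun z => γ₀ z.1 z.2, by fun_prop⟩ : C(P × I, Y))
    ⟨fun z => f (x z), by fun_prop⟩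
    ⟨fun z => δ z.1 z.2, by fun_prop⟩
    ⟨fun z => pY (δ z.1.1 z.2), by fun_prop⟩
    (fun z => by simp [hx0, hγ₀]) (fun z => by simp [hδ])
    (fun z u => by simp [← hδ, hpγ₀]) (fun z t => by simp [hfp, hx])
    (fun z t => by simp)
  let γ : C(P × I, C(I, Y)) :=
    ContinuousMap.curry ⟨fun w : (P × I) × I => k ((w.1.1, w.2), w.1.2), by fun_prop⟩
  have hγ : ∀ z t u, γ (z, t) u = k ((z, u), t) := fun _ _ _ => rfl
  have hlift : ∀ w, γ w 0 = f (x w) ∧ ∀ u, pY (γ w u) = pX (x w) := fun ⟨z, t⟩ =>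
    ⟨by simp [hγ, hkl], fun u => by simp [hγ, hk, hx]⟩
  let lift : C(P × I, FiberwisePathSpace pX pY f) :=
    ⟨fun w => ⟨(x w, γ w), hlift w⟩,
      (x.continuous.prodMk γ.continuous).subtype_mk _⟩
  refine ⟨lift.curry, fun z => ⟨Subtype.ext (Prod.ext (hx0 z) ?_), fun t => ?_⟩⟩
  · ext u
    exact hkb z u
  · exact hkr z t

theorem IsHomotopyEquiv.comp {X Y Z : Type*} [TopologicalSpace X] [TopologicalSpace Y]
    [TopologicalSpace Z] {f : C(X, Y)} {g : C(Y, Z)} (hg : IsHomotopyEquiv g)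
    (hf : IsHomotopyEquiv f) : IsHomotopyEquiv (g.comp f) := by
  obtain ⟨f', hf1, hf2⟩ := hf
  obtain ⟨g', hg1, hg2⟩ := hg
  exact ⟨((ContinuousMap.HomotopyEquiv.mk f f' hf1 hf2).trans ⟨g, g', hg1, hg2⟩).invFun,
    ((ContinuousMap.HomotopyEquiv.mk f f' hf1 hf2).trans ⟨g, g', hg1, hg2⟩).left_inv,
    ((ContinuousMap.HomotopyEquiv.mk f f' hf1 hf2).trans ⟨g, g', hg1, hg2⟩).right_inv⟩

theorem IsHomotopyEquiv.of_homotopic {X Y : Type*} [TopologicalSpace X] [TopologicalSpace Y]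
    {f f' : C(X, Y)} (hf : IsHomotopyEquiv f) (h : f'.Homotopic f) : IsHomotopyEquiv f' := by
  obtain ⟨g, h1, h2⟩ := hf
  exact ⟨g, ((ContinuousMap.Homotopic.refl g).comp h).trans h1,
    (h.comp (ContinuousMap.Homotopic.refl g)).trans h2⟩

theorem FiberwisePathSpace.isHomotopyEquiv_endpoint {B X Y : Type*} [TopologicalSpace B]
    [TopologicalSpace X] [TopologicalSpace Y] {pX : C(X, B)} {pY : C(Y, B)}
    (f : C(X, Y)) (hfp : ∀ x, pY (f x) = pX x) (hf : IsHomotopyEquiv f) :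
    IsHomotopyEquiv (endpoint pX pY f) := by
  let proj : C(FiberwisePathSpace pX pY f, X) := ⟨fun n => n.1.1, by fun_prop⟩
  let const : C(X, FiberwisePathSpace pX pY f) :=
    ⟨fun x => ⟨(x, ContinuousMap.const I (f x)), rfl, fun _ => hfp x⟩, by
      refine Continuous.subtype_mk (continuous_id.prodMk ?_) _
      exact ContinuousMap.continuous_of_continuous_uncurry _ (by
        change Continuous fun z : X × I => f z.1
        fun_prop)⟩
  let path : C(I × FiberwisePathSpace pX pY f, C(I, Y)) :=
    ContinuousMap.curry ⟨fun w => w.1.2.1.2 (w.1.1 * w.2), by fun_prop⟩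
  have hpath : ∀ t n u, path (t, n) u = n.1.2 (t * u) := fun _ _ _ => rfl
  have hproj : IsHomotopyEquiv proj := by
    refine ⟨const, ⟨⟨⟨fun w => ⟨(w.2.1.1, path w), ?_⟩, ?_⟩, ?_, ?_⟩⟩,
      ContinuousMap.Homotopic.refl _⟩
    · obtain ⟨t, n⟩ := w
      exact ⟨by simp [hpath, n.2.1], fun u => by simp [hpath, n.2.2]⟩
    · exact Continuous.subtype_mk (by fun_prop) _
    · intro n
      refine Subtype.ext (Prod.ext rfl ?_)
      ext u
      simp [hpath, n.2.1, const, proj]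
    · intro n
      refine Subtype.ext (Prod.ext rfl ?_)
      ext u
      simp [hpath]
  refine (hf.comp hproj).of_homotopic
    (ContinuousMap.Homotopic.symm ⟨⟨⟨fun w => w.2.1.2 w.1, by fun_prop⟩, ?_, ?_⟩⟩)
  · intro n
    exact n.2.1
  · intro n
    rfl

/-- A map of retractive spaces as in the fiberwise Whitehead theorem has a right inverse up to
homotopy through maps of retractive spaces. -/
theorem exists_fiberwise_right_inverse
    {B X Y : Type*} [TopologicalSpace B] [TopologicalSpace X] [TopologicalSpace Y]
    (iX : C(B, X)) (pX : C(X, B)) (hXr : ∀ b, pX (iX b) = b)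
    (iY : C(B, Y)) (pY : C(Y, B)) (hYr : ∀ b, pY (iY b) = b) (hYi : IsHCofibration iY)
    (hpX : IsHurewiczFibration pX) (hpY : IsHurewiczFibration pY)
    (f : C(X, Y)) (hfi : ∀ b, f (iX b) = iY b) (hfp : ∀ x, pY (f x) = pX x)
    (hf : IsHomotopyEquiv f) :
    ∃ g : C(Y, X), (∀ b, g (iY b) = iX b) ∧ (∀ y, pX (g y) = pY y) ∧
      ∃ K : C(Y × I, Y), (∀ y, K (y, 0) = f (g y)) ∧ (∀ y, K (y, 1) = y) ∧
        (∀ b t, K (iY b, t) = iY b) ∧ ∀ y t, pY (K (y, t)) = pY y := by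
  let τ : C(B, FiberwisePathSpace pX pY f) :=
    ⟨fun b => ⟨(iX b, ContinuousMap.const I (iY b)), (hfi b).symm, fun _ => by simp [hXr, hYr]⟩, by
      refine Continuous.subtype_mk (iX.continuous.prodMk ?_) _
      exact ContinuousMap.continuous_of_continuous_uncurry _ (by
        change Continuous fun z : B × I => iY z.1
        fun_prop)⟩
  obtain ⟨s, hs, hsi⟩ :=
    (FiberwisePathSpace.isHurewiczFibration_endpoint hpX hpY f hfp).exists_section_extending
      (FiberwisePathSpace.isHomotopyEquiv_endpoint f hfp hf) iY pY hYr hYi τ (fun _ => rfl)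
  have hs1 : ∀ y, (s y).1.2 1 = y := hs
  have hp : ∀ y, pX (s y).1.1 = pY y := fun y => by rw [← (s y).2.2 1, hs1]
  refine ⟨⟨fun y => (s y).1.1, by fun_prop⟩, fun b => by simp [hsi, τ], hp,
    ⟨fun z => (s z.1).1.2 z.2, by fun_prop⟩, fun y => (s y).2.1, hs1,
    fun b t => by simp [hsi, τ], fun y t => ((s y).2.2 t).trans (hp y)⟩

/-- **Fiberwise Whitehead theorem.**  If `f : X → Y` is a map of retractive spaces over `B`
with h-cofibrant sections and Hurewicz-fibration projections, and `f` is a homotopy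
equivalence of total spaces, then `f` is a fiberwise based homotopy equivalence: it has an
inverse `g` which is a map of retractive spaces, with both composites homotopic to the
identity through maps of retractive spaces over `B`. -/
theorem fiberwise_whitehead
    {B X Y : Type*} [TopologicalSpace B] [TopologicalSpace X] [TopologicalSpace Y]
    (iX : C(B, X)) (pX : C(X, B)) (hXr : ∀ b, pX (iX b) = b)
    (iY : C(B, Y)) (pY : C(Y, B)) (hYr : ∀ b, pY (iY b) = b)
    (hXi : IsHCofibration iX) (hYi : IsHCofibration iY)
    (hpX : IsHurewiczFibration pX) (hpY : IsHurewiczFibration pY)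
    (f : C(X, Y)) (hfi : ∀ b, f (iX b) = iY b) (hfp : ∀ x, pY (f x) = pX x)
    (hf : IsHomotopyEquiv f) :
    ∃ g : C(Y, X), (∀ b, g (iY b) = iX b) ∧ (∀ y, pX (g y) = pY y) ∧
      (∃ H : C(X × I, X),
        (∀ x, H (x, 0) = g (f x)) ∧ (∀ x, H (x, 1) = x) ∧
        (∀ b t, H (iX b, t) = iX b) ∧ ∀ x t, pX (H (x, t)) = pX x) ∧
      (∃ K : C(Y × I, Y),
        (∀ y, K (y, 0) = f (g y)) ∧ (∀ y, K (y, 1) = y) ∧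
        (∀ b t, K (iY b, t) = iY b) ∧ ∀ y t, pY (K (y, t)) = pY y) := by
  obtain ⟨g, hgi, hgp, K, hK0, hK1, hKi, hKp⟩ :=
    exists_fiberwise_right_inverse iX pX hXr iY pY hYr hYi hpX hpY f hfi hfp hf
  have hg : IsHomotopyEquiv g := by
    obtain ⟨g₀, h₁, h₂⟩ := hf
    have hfg : (f.comp g).Homotopic (ContinuousMap.id Y) :=
      ⟨⟨⟨fun z => K (z.2, z.1), by fun_prop⟩, hK0, hK1⟩⟩
    have hgg₀ : g.Homotopic g₀ :=
      ((h₁.comp (ContinuousMap.Homotopic.refl g)).symm).trans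
        ((ContinuousMap.Homotopic.refl g₀).comp hfg)
    exact ⟨f, (ContinuousMap.Homotopic.refl f).comp hgg₀ |>.trans h₂,
      (hgg₀.comp (ContinuousMap.Homotopic.refl f)).trans h₁⟩
  obtain ⟨f', hfi', hfp', L, hL0, hL1, hLi, hLp⟩ :=
    exists_fiberwise_right_inverse iY pY hYr iX pX hXr hXi hpY hpX g hgi hgp hg
  refine ⟨g, hgi, hgp, ?_, K, hK0, hK1, hKi, hKp⟩
  let Q : C(X, X) → Prop := fun e => (∀ b, e (iX b) = iX b) ∧ ∀ x, pX (e x) = pX x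
  have hL : ContinuousMap.HomotopicWith (g.comp f') (ContinuousMap.id X) Q :=
    ⟨⟨⟨⟨fun z => L (z.2, z.1), by fun_prop⟩, hL0, hL1⟩,
      fun t => ⟨fun b => hLi b t, fun x => hLp x t⟩⟩⟩
  have hfL : ContinuousMap.HomotopicWith (g.comp (f.comp (g.comp f'))) (g.comp f) Q :=
    ⟨⟨⟨⟨fun z => g (f (L (z.2, z.1))), by fun_prop⟩, fun x => by simp [hL0],
      fun x => by simp [hL1]⟩,
      fun t => ⟨fun b => by simp [hLi, hfi, hgi], fun x => by simp [hgp, hfp, hLp]⟩⟩⟩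
  have hKf : ContinuousMap.HomotopicWith (g.comp (f.comp (g.comp f'))) (g.comp f') Q :=
    ⟨⟨⟨⟨fun z => g (K (f' z.2, z.1)), by fun_prop⟩, fun x => by simp [hK0],
      fun x => by simp [hK1]⟩,
      fun t => ⟨fun b => by simp [hfi', hKi, hgi], fun x => by simp [hgp, hKp, hfp']⟩⟩⟩
  obtain ⟨H⟩ := (hfL.symm.trans hKf).trans hL
  exact ⟨⟨fun z => H (z.2, z.1), by fun_prop⟩, fun x => H.apply_zero x, fun x => H.apply_one x,
    fun b t => (H.prop t).1 b, fun x t => (H.prop t).2 x⟩
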